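/- Let Σ ⊂ ℝ³ be a compact embedded minimal surface, y ∈ ℝ³, h > 0, with ∂Σ ⊂ ∂B_h(y), B_{3h/4}(y) ∩ Σ ≠ ∅, and Σ ⊂ B_h(y) ∩ {x : |x₃ − y₃| ≤ 2β_A h}, where β_A > 0 is a constant chosen so that the slab minus B_{h/8}(y) lies in the solid cone N_{θ₀}(y) and the leaf {f_y = 3h/16} intersected with the slab lies in B_{7h/32}(y). Then B_{h/4}(y) ∩ Σ ≠ ∅. -/

import Mathlib

open Real Set Pointwise Metric

noncomputable section

abbrev R3 := EuclideanSpace ℝ (Fin 3)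
abbrev R2 := EuclideanSpace ℝ (Fin 2)

/-- The point `(a, b, c) ∈ ℝ³`. -/
def toR3 (a b c : ℝ) : R3 := (WithLp.equiv 2 (Fin 3 → ℝ)).symm ![a, b, c]

/-- Vertical projection `Π : ℝ³ → ℝ²`. -/
def pr (x : R3) : R2 := (WithLp.equiv 2 (Fin 2 → ℝ)).symm ![x 0, x 1]

/-- The `i`-th coordinate direction of `ℝ²`. -/
def e2 (i : Fin 2) : R2 := EuclideanSpace.single i 1

/-- `u` satisfies the minimal surface equation
`(1 + u_y²) u_xx − 2 u_x u_y u_xy + (1 + u_x²) u_yy = 0` on `Ω`, and is `C²` there. -/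
def SatisfiesMSE (u : R2 → ℝ) (Ω : Set R2) : Prop :=
  ∀ p ∈ Ω, ContDiffAt ℝ 2 u p ∧
    (1 + fderiv ℝ u p (e2 1) ^ 2) * fderiv ℝ (fun q => fderiv ℝ u q (e2 0)) p (e2 0)
      - 2 * fderiv ℝ u p (e2 0) * fderiv ℝ u p (e2 1) *
          fderiv ℝ (fun q => fderiv ℝ u q (e2 0)) p (e2 1)
      + (1 + fderiv ℝ u p (e2 0) ^ 2) *
          fderiv ℝ (fun q => fderiv ℝ u q (e2 1)) p (e2 1) = 0

/-- `S` is a minimal surface with boundary `bd`: near every non-boundary point, after a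
rigid rotation, `S` coincides with the graph of a solution of the minimal surface
equation. -/
def IsMinimalSurface (S bd : Set R3) : Prop :=
  bd ⊆ S ∧ ∀ z ∈ S \ bd, ∃ (Q : R3 ≃ₗᵢ[ℝ] R3) (ε : ℝ) (u : R2 → ℝ), 0 < ε ∧
    SatisfiesMSE u (ball (pr (Q z)) ε) ∧
    (Q '' S) ∩ {x : R3 | dist (pr x) (pr (Q z)) < ε ∧ |x 2 - (Q z) 2| < ε} =
      {x : R3 | pr x ∈ ball (pr (Q z)) ε ∧ x = toR3 (x 0) (x 1) (u (pr x)) ∧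
        |x 2 - (Q z) 2| < ε}

/-- `S` is graphical at `z`: near `z` it lies on the graph of a differentiable function
of `(x₁, x₂)`; equivalently the tangent plane at `z` is not vertical. -/
def GraphicalAt (S : Set R3) (z : R3) : Prop :=
  ∃ ε > 0, ∃ u : R2 → ℝ, DifferentiableOn ℝ u (ball (pr z) ε) ∧
    ∀ x ∈ S ∩ ball z ε, x 2 = u (pr x)

/-- The unique positive solution `t₀` of `cosh t = t · sinh t`. -/
def tcrit : ℝ := sInf {t | 0 < t ∧ Real.cosh t ≤ t * Real.sinh t}

/-- `sin² θ₀` for the critical catenoid cone angle `θ₀`. -/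
def sinSqθ₀ : ℝ := tcrit ^ 2 / (tcrit ^ 2 + Real.cosh tcrit ^ 2)

/-- The middle portion of the unit vertical catenoid centered at `y`. -/
def Cat0At (y : R3) : Set R3 :=
  {x | Real.cosh (x 2 - y 2) ^ 2 = (x 0 - y 0) ^ 2 + (x 1 - y 1) ^ 2 ∧
    |x 2 - y 2| < tcrit}

/-- The open solid double cone `N_{θ₀}(y)` of critical angle centered at `y`. -/
def Ncone (y : R3) : Set R3 := {x | x ≠ y ∧ (x 2 - y 2) ^ 2 < dist x y ^ 2 * sinSqθ₀}

/-- The catenoid-foliation function `f_y` centered at `y`: `y + (x−y)/f_y(x) ∈ Cat₀(y)`. -/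
def fCat (y x : R3) : ℝ := sInf {l | 0 < l ∧ y + l⁻¹ • (x - y) ∈ Cat0At y}

/-- The open tubular neighborhood of radius `r` of a set. -/
def Tub (r : ℝ) {α : Type*} [PseudoEMetricSpace α] (s : Set α) : Set α :=
  Metric.thickening r s


open Filter Topology

lemma snd_test (g g1 : ℝ → ℝ) (g2 : ℝ) (hmin : IsLocalMin g 0)
    (h1 : ∀ᶠ t in 𝓝 (0:ℝ), HasDerivAt g (g1 t) t) (h2 : HasDerivAt g1 g2 0) :
    g1 0 = 0 ∧ 0 ≤ g2 := by
  have h10 : HasDerivAt g (g1 0) 0 := h1.self_of_nhds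
  have hz : g1 0 = 0 := hmin.hasDerivAt_eq_zero h10
  refine ⟨hz, ?_⟩
  have hd : deriv g =ᶠ[𝓝 0] g1 := h1.mono fun t ht => ht.deriv
  have hdd : deriv (deriv g) 0 = g2 := by rw [hd.deriv_eq, h2.deriv]
  by_contra! hneg
  have hmax : IsLocalMax g 0 :=
    isLocalMax_of_deriv_deriv_neg (by rw [hdd]; exact hneg) (by rw [h10.deriv, hz])
      h10.continuousAt
  have hc : g =ᶠ[𝓝 0] fun _ => g 0 := by
    filter_upwards [hmin, hmax] with t h1 h2 using le_antisymm h2 h1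
  have : deriv g =ᶠ[𝓝 0] deriv (fun _ => g 0) := hc.deriv
  have h3 := this.deriv_eq
  rw [hdd] at h3
  simp at h3
  linarith

lemma line_deriv2 (u : R2 → ℝ) (p v : R2) (hu : ContDiffAt ℝ 2 u p) :
    (∀ᶠ t in 𝓝 (0:ℝ), HasDerivAt (fun t : ℝ => u (p + t • v)) (fderiv ℝ u (p + t • v) v) t) ∧
    HasDerivAt (fun t : ℝ => fderiv ℝ u (p + t • v) v) (fderiv ℝ (fderiv ℝ u) p v v) 0 := by
  have hl : ∀ t : ℝ, HasDerivAt (fun t : ℝ => p + t • v) v t := fun t => by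
    simpa using ((hasDerivAt_id t).smul_const v).const_add p
  have hcont : Tendsto (fun t : ℝ => p + t • v) (𝓝 0) (𝓝 p) := by
    simpa using (hl 0).continuousAt.tendsto
  constructor
  · have := hu.eventually (by simp)
    filter_upwards [hcont.eventually this] with t ht
    exact (ht.differentiableAt (by simp)).hasFDerivAt.comp_hasDerivAt t (hl t)
  · have hd : ContDiffAt ℝ 1 (fderiv ℝ u) p := hu.fderiv_right (by norm_num)
    have hd' : HasFDerivAt (fderiv ℝ u) (fderiv ℝ (fderiv ℝ u) p) (p + (0:ℝ) • v) := by
      simpa using (hd.differentiableAt (by simp)).hasFDerivAt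
    have := hd'.comp_hasDerivAt (0:ℝ) (hl 0)
    have h2 := this.clm_apply (hasDerivAt_const (0:ℝ) v)
    simpa using h2

lemma phi_test (a b c a1 b1 c1 : ℝ → ℝ) (a2 b2 c2 k : ℝ)
    (ha : ∀ᶠ t in 𝓝 (0:ℝ), HasDerivAt a (a1 t) t) (ha2 : HasDerivAt a1 a2 0)
    (hb : ∀ᶠ t in 𝓝 (0:ℝ), HasDerivAt b (b1 t) t) (hb2 : HasDerivAt b1 b2 0)
    (hc : ∀ᶠ t in 𝓝 (0:ℝ), HasDerivAt c (c1 t) t) (hc2 : HasDerivAt c1 c2 0)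
    (hr : 0 < a 0 ^ 2 + b 0 ^ 2)
    (hmin : IsLocalMin (fun t => Real.log (a t ^ 2 + b t ^ 2) - k * c t ^ 2) 0) :
    (a 0 * a1 0 + b 0 * b1 0) / (a 0 ^ 2 + b 0 ^ 2) = k * c 0 * c1 0 ∧
    0 ≤ (a1 0 ^ 2 + b1 0 ^ 2 + a 0 * a2 + b 0 * b2) / (a 0 ^ 2 + b 0 ^ 2)
      - 2 * (k * c 0 * c1 0) ^ 2 - k * (c1 0 ^ 2 + c 0 * c2) := by
  have A0 := ha.self_of_nhds
  have B0 := hb.self_of_nhds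
  have C0 := hc.self_of_nhds
  have hpos : ∀ᶠ t in 𝓝 (0:ℝ), 0 < a t ^ 2 + b t ^ 2 :=
    ((A0.continuousAt.pow 2).add (B0.continuousAt.pow 2)).eventually (lt_mem_nhds hr)
  have key := snd_test _ (fun t => (2 * (a t * a1 t + b t * b1 t)) / (a t ^ 2 + b t ^ 2)
      - 2 * k * (c t * c1 t))
      ((2 * (a1 0 ^ 2 + b1 0 ^ 2 + a 0 * a2 + b 0 * b2) * (a 0 ^ 2 + b 0 ^ 2)
        - (2 * (a 0 * a1 0 + b 0 * b1 0)) * (2 * (a 0 * a1 0 + b 0 * b1 0)))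
          / (a 0 ^ 2 + b 0 ^ 2) ^ 2 - 2 * k * (c1 0 ^ 2 + c 0 * c2)) hmin ?_ ?_
  · obtain ⟨k1, k2⟩ := key
    have e1 : (a 0 * a1 0 + b 0 * b1 0) / (a 0 ^ 2 + b 0 ^ 2) = k * c 0 * c1 0 := by
      simp only [mul_div_assoc] at k1
      linarith
    refine ⟨e1, ?_⟩
    rw [← e1]
    have : (2 * (a1 0 ^ 2 + b1 0 ^ 2 + a 0 * a2 + b 0 * b2) * (a 0 ^ 2 + b 0 ^ 2)
        - (2 * (a 0 * a1 0 + b 0 * b1 0)) * (2 * (a 0 * a1 0 + b 0 * b1 0)))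
          / (a 0 ^ 2 + b 0 ^ 2) ^ 2 - 2 * k * (c1 0 ^ 2 + c 0 * c2)
        = 2 * ((a1 0 ^ 2 + b1 0 ^ 2 + a 0 * a2 + b 0 * b2) / (a 0 ^ 2 + b 0 ^ 2)
      - 2 * ((a 0 * a1 0 + b 0 * b1 0) / (a 0 ^ 2 + b 0 ^ 2)) ^ 2
      - k * (c1 0 ^ 2 + c 0 * c2)) := by
      field_simp
    linarith
  · filter_upwards [ha, hb, hc, hpos] with t At Bt Ct ht
    have := (((At.pow 2).add (Bt.pow 2)).log ht.ne').sub ((Ct.pow 2).const_mul k)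
    refine HasDerivAt.congr_deriv this ?_
    simp
    ring
  · have hN := ((A0.mul ha2).add (B0.mul hb2)).const_mul 2
    have hD := (A0.pow 2).add (B0.pow 2)
    have := (hN.div hD hr.ne').sub ((C0.mul hc2).const_mul (2 * k))
    refine HasDerivAt.congr_deriv this ?_
    simp
    ring

set_option maxHeartbeats 1000000 in
/-- Pure algebra. `R j i` is an orthogonal matrix. -/
lemma alg_contra (R : Fin 3 → Fin 3 → ℝ) (ux uy a b c k D00 D01 D11 : ℝ)
    (row : ∀ j k, ∑ i, R j i * R k i = if j = k then 1 else 0)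
    (col : ∀ j k, ∑ i, R i j * R i k = if j = k then 1 else 0)
    (hr : 0 < a ^ 2 + b ^ 2) (hk : 1 < k * (a ^ 2 + b ^ 2))
    (hM : (1 + uy ^ 2) * D00 - 2 * ux * uy * D01 + (1 + ux ^ 2) * D11 = 0)
    (T : ℝ → ℝ → Fin 3 → ℝ)
    (hT : ∀ v w j, T v w j = R j 0 * v + R j 1 * w + R j 2 * (ux * v + uy * w))
    (D : ℝ → ℝ → ℝ) (hD : ∀ v w, D v w = v ^ 2 * D00 + 2 * v * w * D01 + w ^ 2 * D11)
    (H : ∀ v w, (a * T v w 0 + b * T v w 1) / (a ^ 2 + b ^ 2) = k * c * T v w 2 ∧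
      0 ≤ (T v w 0 ^ 2 + T v w 1 ^ 2 + a * (R 0 2 * D v w) + b * (R 1 2 * D v w)) / (a ^ 2 + b ^ 2)
        - 2 * (k * c * T v w 2) ^ 2 - k * (T v w 2 ^ 2 + c * (R 2 2 * D v w))) : False := by
  obtain ⟨p0, q0⟩ := H 1 0
  obtain ⟨p1, q1⟩ := H 0 1
  obtain ⟨-, q2⟩ := H uy (-ux)
  set r := a ^ 2 + b ^ 2 with hrdef
  have hrne := hr.ne'
  obtain ⟨N, hN⟩ : ∃ N : Fin 3 → ℝ, ∀ j, N j = -ux * R j 0 - uy * R j 1 + R j 2 := ⟨_, fun _ => rfl⟩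
  obtain ⟨W, hWd⟩ : ∃ W, W = 1 + ux ^ 2 + uy ^ 2 := ⟨_, rfl⟩
  have hW : N 0 ^ 2 + N 1 ^ 2 + N 2 ^ 2 = W := by
    have c00 := col 0 0
    have c11 := col 1 1
    have c22 := col 2 2
    have c01 := col 0 1
    have c02 := col 0 2
    have c12 := col 1 2
    simp [Fin.sum_univ_three] at c00 c11 c22 c01 c02 c12
    simp only [hN, hWd]
    linear_combination ux ^ 2 * c00 + uy ^ 2 * c11 + c22 + 2 * ux * uy * c01 - 2 * ux * c02
      - 2 * uy * c12
  have hsum : ∀ j, T 1 0 j ^ 2 + T 0 1 j ^ 2 + T uy (-ux) j ^ 2 = W - N j ^ 2 := by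
    intro j
    have rj := row j j
    simp [Fin.sum_univ_three] at rj
    simp only [hT, hN, hWd]
    linear_combination (1 + ux ^ 2 + uy ^ 2) * rj
  have hDsum : D 1 0 + D 0 1 + D uy (-ux) = 0 := by
    simp only [hD]
    linear_combination hM
  -- gradient
  obtain ⟨x0, hx0⟩ : ∃ x, x = a / r := ⟨_, rfl⟩
  obtain ⟨x1, hx1⟩ : ∃ x, x = b / r := ⟨_, rfl⟩
  obtain ⟨x2, hx2⟩ : ∃ x, x = -(k * c) := ⟨_, rfl⟩
  obtain ⟨lam, hlam⟩ : ∃ x, x = x0 * R 0 2 + x1 * R 1 2 + x2 * R 2 2 := ⟨_, rfl⟩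
  have g0 : x0 * R 0 0 + x1 * R 1 0 + x2 * R 2 0 = -ux * lam := by
    simp only [hT] at p0
    have : (a * (R 0 0 * 1 + R 0 1 * 0 + R 0 2 * (ux * 1 + uy * 0)) +
      b * (R 1 0 * 1 + R 1 1 * 0 + R 1 2 * (ux * 1 + uy * 0))) / r =
      x0 * (R 0 0 + R 0 2 * ux) + x1 * (R 1 0 + R 1 2 * ux) := by
      simp only [hx0, hx1]; ring
    rw [this] at p0
    simp only [hlam, hx2]
    linear_combination p0
  have g1 : x0 * R 0 1 + x1 * R 1 1 + x2 * R 2 1 = -uy * lam := by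
    simp only [hT] at p1
    have : (a * (R 0 0 * 0 + R 0 1 * 1 + R 0 2 * (ux * 0 + uy * 1)) +
      b * (R 1 0 * 0 + R 1 1 * 1 + R 1 2 * (ux * 0 + uy * 1))) / r =
      x0 * (R 0 1 + R 0 2 * uy) + x1 * (R 1 1 + R 1 2 * uy) := by
      simp only [hx0, hx1]; ring
    rw [this] at p1
    simp only [hlam, hx2]
    linear_combination p1
  have r00 := row 0 0
  have r11 := row 1 1
  have r22 := row 2 2
  have r01 := row 0 1
  have r02 := row 0 2
  have r12 := row 1 2
  simp [Fin.sum_univ_three] at r00 r11 r22 r01 r02 r12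
  have n0 : x0 = lam * N 0 := by
    simp only [hN]
    linear_combination R 0 0 * g0 + R 0 1 * g1 - R 0 2 * hlam - x0 * r00 - x1 * r01 - x2 * r02
  have n1 : x1 = lam * N 1 := by
    simp only [hN]
    linear_combination R 1 0 * g0 + R 1 1 * g1 - R 1 2 * hlam - x0 * r01 - x1 * r11 - x2 * r12
  have n2 : x2 = lam * N 2 := by
    simp only [hN]
    linear_combination R 2 0 * g0 + R 2 1 * g1 - R 2 2 * hlam - x0 * r02 - x1 * r12 - x2 * r22
  have hx : x0 ^ 2 + x1 ^ 2 = 1 / r := by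
    simp only [hx0, hx1]
    field_simp
    rw [hrdef]
  have hA : lam ^ 2 * (N 0 ^ 2 + N 1 ^ 2) = 1 / r := by
    rw [← hx, n0, n1]; ring
  have hApos : 0 < N 0 ^ 2 + N 1 ^ 2 := by
    have : 0 < 1 / r := by positivity
    rw [← hA] at this
    exact pos_of_mul_pos_right this (sq_nonneg _)
  have hn2 : (k * c) ^ 2 = lam ^ 2 * N 2 ^ 2 := by
    have : (k * c) ^ 2 = x2 ^ 2 := by simp only [hx2]; ring
    rw [this, n2]; ring
  have s0 := hsum 0
  have s1 := hsum 1
  have s2 := hsum 2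
  have hQ : 0 ≤ (2 * W - N 0 ^ 2 - N 1 ^ 2) / r - 2 * (k * c) ^ 2 * (W - N 2 ^ 2)
      - k * (W - N 2 ^ 2) := by
    have := add_nonneg (add_nonneg q0 q1) q2
    refine this.trans_eq ?_
    rw [← s2]
    have e : 2 * W - N 0 ^ 2 - N 1 ^ 2 = T 1 0 0 ^ 2 + T 0 1 0 ^ 2 + T uy (-ux) 0 ^ 2
      + (T 1 0 1 ^ 2 + T 0 1 1 ^ 2 + T uy (-ux) 1 ^ 2) := by rw [s0, s1]; ring
    rw [e]
    linear_combination (a * R 0 2 / r + b * R 1 2 / r - k * c * R 2 2) * hDsum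
  rw [← hW, hn2] at hQ
  have : (2 * (N 0 ^ 2 + N 1 ^ 2 + N 2 ^ 2) - N 0 ^ 2 - N 1 ^ 2) / r -
      2 * (lam ^ 2 * N 2 ^ 2) * (N 0 ^ 2 + N 1 ^ 2 + N 2 ^ 2 - N 2 ^ 2)
      - k * (N 0 ^ 2 + N 1 ^ 2 + N 2 ^ 2 - N 2 ^ 2) = (N 0 ^ 2 + N 1 ^ 2) * (1 / r - k) := by
    linear_combination - 2 * N 2 ^ 2 * hA
  rw [this] at hQ
  have : 1 / r < k := by rw [div_lt_iff₀ hr]; exact hk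
  nlinarith

lemma inner_sum3 (x w : R3) : inner ℝ x w = ∑ i, x i * w i := by
  simp [PiLp.inner_apply, mul_comm]

lemma symm_coord (Q : R3 ≃ₗᵢ[ℝ] R3) (w : R3) (j : Fin 3) :
    (Q.symm w) j = ∑ i, (Q (EuclideanSpace.single j 1)) i * w i := by
  rw [← inner_sum3]
  have : inner ℝ (Q (EuclideanSpace.single j (1:ℝ))) w
      = inner ℝ (Q (EuclideanSpace.single j (1:ℝ))) (Q (Q.symm w)) := by simp
  rw [this, Q.inner_map_map, EuclideanSpace.inner_single_left]
  simp

lemma row_rel (Q : R3 ≃ₗᵢ[ℝ] R3) (j k : Fin 3) :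
    ∑ i, (Q (EuclideanSpace.single j 1)) i * (Q (EuclideanSpace.single k 1)) i
      = if j = k then (1:ℝ) else 0 := by
  rw [← inner_sum3, Q.inner_map_map, EuclideanSpace.inner_single_left]
  simp

lemma col_rel (Q : R3 ≃ₗᵢ[ℝ] R3) (j k : Fin 3) :
    ∑ i, (Q (EuclideanSpace.single i 1)) j * (Q (EuclideanSpace.single i 1)) k
      = if j = k then (1:ℝ) else 0 := by
  have h : ∀ i j : Fin 3, (Q (EuclideanSpace.single i (1:ℝ))) j
      = (Q.symm (EuclideanSpace.single j (1:ℝ))) i := by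
    intro i j
    rw [symm_coord]
    simp [Pi.single_apply]
  simp only [h]
  rw [← inner_sum3, Q.symm.inner_map_map, EuclideanSpace.inner_single_left]
  simp [Pi.single_apply]

/-- The comparison function (its level sets replace the catenoid foliation). -/
def phiC (y : R3) (k : ℝ) (x : R3) : ℝ :=
  Real.log ((x 0 - y 0) ^ 2 + (x 1 - y 1) ^ 2) - k * (x 2 - y 2) ^ 2

lemma toR3_0 (a b c : ℝ) : toR3 a b c 0 = a := rfl
lemma toR3_1 (a b c : ℝ) : toR3 a b c 1 = b := rfl
lemma toR3_2 (a b c : ℝ) : toR3 a b c 2 = c := rfl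
lemma pr_0 (x : R3) : pr x 0 = x 0 := rfl
lemma pr_1 (x : R3) : pr x 1 = x 1 := rfl

lemma pr_toR3 (q : R2) (c : ℝ) : pr (toR3 (q 0) (q 1) c) = q := by
  ext i
  fin_cases i <;> rfl

lemma no_interior_min (S : Set R3) (y z : R3) (k : ℝ) (hz : z ∈ S)
    (Q : R3 ≃ₗᵢ[ℝ] R3) (ε : ℝ) (u : R2 → ℝ) (hε : 0 < ε)
    (hu : SatisfiesMSE u (ball (pr (Q z)) ε))
    (hS : (Q '' S) ∩ {x : R3 | dist (pr x) (pr (Q z)) < ε ∧ |x 2 - (Q z) 2| < ε} =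
      {x : R3 | pr x ∈ ball (pr (Q z)) ε ∧ x = toR3 (x 0) (x 1) (u (pr x)) ∧
        |x 2 - (Q z) 2| < ε})
    (hr : 0 < (z 0 - y 0) ^ 2 + (z 1 - y 1) ^ 2)
    (hk : 1 < k * ((z 0 - y 0) ^ 2 + (z 1 - y 1) ^ 2))
    (hmin : ∀ x ∈ S, phiC y k z ≤ phiC y k x) : False := by
  obtain ⟨hC, hM⟩ := hu (pr (Q z)) (mem_ball_self hε)
  have hzu : (Q z) = toR3 ((Q z) 0) ((Q z) 1) (u (pr (Q z))) := by
    have : Q z ∈ (Q '' S) ∩ {x : R3 | dist (pr x) (pr (Q z)) < ε ∧ |x 2 - (Q z) 2| < ε} :=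
      ⟨mem_image_of_mem _ hz, by simpa using hε⟩
    rw [hS] at this
    exact this.2.1
  have hzu2 : (Q z) 2 = u (pr (Q z)) := by
    conv_lhs => rw [hzu]
    rfl
  obtain ⟨p, hp⟩ : ∃ p, p = pr (Q z) := ⟨_, rfl⟩
  rw [← hp] at hS hC hM hzu hzu2
  obtain ⟨R, hR⟩ : ∃ R : Fin 3 → Fin 3 → ℝ, ∀ j i, R j i = (Q (EuclideanSpace.single j 1)) i :=
    ⟨_, fun _ _ => rfl⟩
  have hQs : ∀ (q : R2) (c : ℝ) j, (Q.symm (toR3 (q 0) (q 1) c)) j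
      = R j 0 * q 0 + R j 1 * q 1 + R j 2 * c := by
    intro q c j
    rw [symm_coord, Fin.sum_univ_three]
    simp only [hR, toR3_0, toR3_1, toR3_2]
  have hz0 : z = Q.symm (toR3 (p 0) (p 1) (u p)) := by
    rw [LinearIsometryEquiv.eq_symm_apply]
    conv_lhs => rw [hzu]
    rw [hp]; rfl
  have hzj : ∀ j, z j = R j 0 * p 0 + R j 1 * p 1 + R j 2 * u p := by
    intro j
    rw [← hQs, ← hz0]
  have hdiff : DifferentiableAt ℝ (fderiv ℝ u) p :=
    (hC.fderiv_right (m := 1) (by norm_num)).differentiableAt (by simp)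
  have hD : ∀ v w, fderiv ℝ (fun q => fderiv ℝ u q v) p w = fderiv ℝ (fderiv ℝ u) p w v := by
    intro v w
    rw [fderiv_clm_apply hdiff (differentiableAt_const v)]
    simp
  have hsymm : ∀ v w, fderiv ℝ (fderiv ℝ u) p v w = fderiv ℝ (fderiv ℝ u) p w v := by
    have : IsSymmSndFDerivAt ℝ u p := hC.isSymmSndFDerivAt (by simp)
    exact fun v w => this v w
  simp only [hD] at hM
  refine alg_contra R (fderiv ℝ u p (e2 0)) (fderiv ℝ u p (e2 1)) (z 0 - y 0) (z 1 - y 1)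
    (z 2 - y 2) k _ _ _ (fun j k => by simpa only [hR] using row_rel Q j k)
    (fun j k => by simpa only [hR] using col_rel Q j k) hr hk hM
    (fun v w j => R j 0 * v + R j 1 * w + R j 2 * (fderiv ℝ u p (e2 0) * v
      + fderiv ℝ u p (e2 1) * w)) (fun _ _ _ => rfl)
    (fun v w => v ^ 2 * fderiv ℝ (fderiv ℝ u) p (e2 0) (e2 0)
      + 2 * v * w * fderiv ℝ (fderiv ℝ u) p (e2 1) (e2 0)
      + w ^ 2 * fderiv ℝ (fderiv ℝ u) p (e2 1) (e2 1)) (fun _ _ => rfl) ?_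
  intro v w
  obtain ⟨V, hV⟩ : ∃ V, V = v • e2 0 + w • e2 1 := ⟨_, rfl⟩
  have hV0 : V 0 = v := by simp [hV, e2]
  have hV1 : V 1 = w := by simp [hV, e2]
  have hfV : fderiv ℝ u p V = fderiv ℝ u p (e2 0) * v + fderiv ℝ u p (e2 1) * w := by
    rw [hV]; simp; ring
  have hfVV : fderiv ℝ (fderiv ℝ u) p V V = v ^ 2 * fderiv ℝ (fderiv ℝ u) p (e2 0) (e2 0)
      + 2 * v * w * fderiv ℝ (fderiv ℝ u) p (e2 1) (e2 0)
      + w ^ 2 * fderiv ℝ (fderiv ℝ u) p (e2 1) (e2 1) := by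
    rw [hV]
    simp
    rw [hsymm (e2 0) (e2 1)]
    ring
  obtain ⟨L1, L2⟩ := line_deriv2 u p V hC
  -- coordinate curves
  have cur1 : ∀ j, ∀ᶠ t in 𝓝 (0:ℝ), HasDerivAt
      (fun t : ℝ => R j 0 * (p 0 + t * v) + R j 1 * (p 1 + t * w) + R j 2 * u (p + t • V) - y j)
      (R j 0 * v + R j 1 * w + R j 2 * fderiv ℝ u (p + t • V) V) t := by
    intro j
    filter_upwards [L1] with t ht
    have h0 := (((hasDerivAt_id t).mul_const v).const_add (p 0)).const_mul (R j 0)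
    have h1 := (((hasDerivAt_id t).mul_const w).const_add (p 1)).const_mul (R j 1)
    have := ((h0.add h1).add (ht.const_mul (R j 2))).sub_const (y j)
    refine HasDerivAt.congr_deriv this ?_
    simp
  have cur2 : ∀ j, HasDerivAt
      (fun t : ℝ => R j 0 * v + R j 1 * w + R j 2 * fderiv ℝ u (p + t • V) V)
      (R j 2 * fderiv ℝ (fderiv ℝ u) p V V) 0 := by
    intro j
    exact (L2.const_mul (R j 2)).const_add _
  have hval : ∀ j, R j 0 * (p 0 + (0:ℝ) * v) + R j 1 * (p 1 + (0:ℝ) * w)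
      + R j 2 * u (p + (0:ℝ) • V) - y j = z j - y j := by
    intro j; rw [hzj]; simp
  have key := phi_test _ _ _ _ _ _ _ _ _ k (cur1 0) (cur2 0) (cur1 1) (cur2 1) (cur1 2) (cur2 2)
    (by rw [hval, hval]; exact hr) ?_
  · simp only [hfVV, zero_smul, zero_mul, add_zero, hfV, ← hzj] at key
    exact key
  · have hl : ContinuousAt (fun t : ℝ => p + t • V) 0 := by fun_prop
    have hl0 : Tendsto (fun t : ℝ => p + t • V) (𝓝 0) (𝓝 p) := by
      simpa using hl.tendsto
    have hb : ∀ᶠ t in 𝓝 (0:ℝ), p + t • V ∈ ball p ε := hl0.eventually (ball_mem_nhds p hε)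
    have hub : ∀ᶠ t in 𝓝 (0:ℝ), u (p + t • V) ∈ ball (u p) ε :=
      (hC.continuousAt.tendsto.comp hl0).eventually (ball_mem_nhds _ hε)
    filter_upwards [hb, hub] with t ht hut
    have hmem : Q.symm (toR3 ((p + t • V) 0) ((p + t • V) 1) (u (p + t • V))) ∈ S := by
      have hin : toR3 ((p + t • V) 0) ((p + t • V) 1) (u (p + t • V)) ∈
          (Q '' S) ∩ {x : R3 | dist (pr x) p < ε ∧ |x 2 - (Q z) 2| < ε} := by
        rw [hS]
        refine ⟨?_, ?_, ?_⟩
        · rw [pr_toR3]; exact ht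
        · rw [pr_toR3]; rfl
        · rw [hzu2, toR3_2]; simpa [Real.dist_eq] using hut
      obtain ⟨s, hs, hs'⟩ := hin.1
      rw [← hs']; simpa using hs
    have := hmin _ hmem
    simp only [phiC, hQs] at this
    simp only [hval]
    have e0 : (p + t • V) 0 = p 0 + t * v := by rw [← hV0]; simp
    have e1 : (p + t • V) 1 = p 1 + t * w := by rw [← hV1]; simp
    rw [e0, e1] at this
    exact this

lemma sinSq_le_one : sinSqθ₀ ≤ 1 := by
  unfold sinSqθ₀
  have := Real.cosh_pos tcrit
  rw [div_le_one (by positivity)]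
  nlinarith

lemma dist_sq3 (x y : R3) :
    dist x y ^ 2 = (x 0 - y 0) ^ 2 + (x 1 - y 1) ^ 2 + (x 2 - y 2) ^ 2 := by
  rw [EuclideanSpace.dist_eq, Real.sq_sqrt (by positivity)]
  simp [Fin.sum_univ_three, Real.dist_eq, sq_abs]

lemma slab_small (y : R3) (h βA : ℝ) (hh : 0 < h)
    (hβA1 : {x : R3 | |x 2 - y 2| ≤ 2 * βA * h} \ ball y (h / 8) ⊆ Ncone y) :
    2 * βA * h < h / 8 := by
  by_contra! hc
  have hd : dist (toR3 (y 0) (y 1) (y 2 + h / 8)) y ^ 2 = (h / 8) ^ 2 := by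
    rw [dist_sq3, toR3_0, toR3_1, toR3_2]; ring
  have hmem := @hβA1 (toR3 (y 0) (y 1) (y 2 + h / 8)) ⟨?_, ?_⟩
  · have h2 := hmem.2
    rw [hd, toR3_2] at h2
    have := sinSq_le_one
    have : 0 < (h / 8) ^ 2 := by positivity
    nlinarith
  · simp only [mem_setOf_eq, toR3_2, add_sub_cancel_left]
    rw [abs_of_pos (by positivity)]; exact hc
  · rw [mem_ball, not_lt]
    nlinarith [dist_nonneg (x := toR3 (y 0) (y 1) (y 2 + h / 8)) (y := y)]

/-- A compact embedded minimal surface in a narrow slab, with boundary on the sphere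
`∂B_h(y)`, which comes within `3h/4` of the center `y`, must come within `h/4` of `y`.
Here `β_A > 0` is a constant such that the slab minus `B_{h/8}(y)` lies in the solid
cone `N_{θ₀}(y)` and the leaf `{f_y = 3h/16}` within the slab lies in `B_{7h/32}(y)`. -/
theorem stmt12 (S bd : Set R3) (hcpt : IsCompact S) (hmin : IsMinimalSurface S bd)
    (y : R3) (h βA : ℝ) (hh : 0 < h) (hβA : 0 < βA)
    (hβA1 : {x : R3 | |x 2 - y 2| ≤ 2 * βA * h} \ ball y (h / 8) ⊆ Ncone y)
    (hβA2 : {x : R3 | fCat y x = 3 * h / 16} ∩ {x : R3 | |x 2 - y 2| ≤ 2 * βA * h} ⊆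
      ball y (7 * h / 32))
    (hbd : bd ⊆ sphere y h)
    (hslab : S ⊆ closedBall y h ∩ {x : R3 | |x 2 - y 2| ≤ 2 * βA * h})
    (hnear : (ball y (3 * h / 4) ∩ S).Nonempty) :
    (ball y (h / 4) ∩ S).Nonempty := by
  by_contra hne
  have hfar : ∀ x ∈ S, h / 4 ≤ dist x y := by
    intro x hx
    by_contra! hlt
    exact hne ⟨x, hlt, hx⟩
  have hsm := slab_small y h βA hh hβA1
  have hz2 : ∀ x ∈ S, (x 2 - y 2) ^ 2 ≤ h ^ 2 / 64 := by
    intro x hx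
    have h1 : |x 2 - y 2| ≤ h / 8 := (hslab hx).2.trans hsm.le
    rw [← sq_abs]
    nlinarith [abs_nonneg (x 2 - y 2)]
  have hr2 : ∀ x ∈ S, 3 * h ^ 2 / 64 ≤ (x 0 - y 0) ^ 2 + (x 1 - y 1) ^ 2 := by
    intro x hx
    have h1 := hz2 x hx
    have h2 := hfar x hx
    have h3 := dist_sq3 x y
    nlinarith
  have hh2 : 0 < h ^ 2 := by positivity
  have hrpos : ∀ x ∈ S, 0 < (x 0 - y 0) ^ 2 + (x 1 - y 1) ^ 2 := fun x hx =>
    lt_of_lt_of_le (by positivity) (hr2 x hx)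
  have hcont : ContinuousOn (phiC y (32 / h ^ 2)) S := by
    unfold phiC
    refine ContinuousOn.sub (ContinuousOn.log (by fun_prop) fun x hx => (hrpos x hx).ne') ?_
    fun_prop
  obtain ⟨x1, hx1b, hx1S⟩ := hnear
  obtain ⟨z, hzS, hzmin⟩ := hcpt.exists_isMinOn ⟨x1, hx1S⟩ hcont
  have hzmin' : ∀ x ∈ S, phiC y (32 / h ^ 2) z ≤ phiC y (32 / h ^ 2) x := fun x hx => hzmin hx
  have hzbd : z ∉ bd := by
    intro hzb
    have hdz : dist z y = h := hbd hzb
    have h3 := dist_sq3 z y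
    rw [hdz] at h3
    have hz := hz2 z hzS
    have hle := hzmin' x1 hx1S
    have hx1d := dist_sq3 x1 y
    rw [mem_ball] at hx1b
    have hx1r : (x1 0 - y 0) ^ 2 + (x1 1 - y 1) ^ 2 ≤ 9 / 16 * h ^ 2 := by
      nlinarith [dist_nonneg (x := x1) (y := y), sq_nonneg (x1 2 - y 2)]
    have hzr : 63 / 64 * h ^ 2 ≤ (z 0 - y 0) ^ 2 + (z 1 - y 1) ^ 2 := by linarith
    unfold phiC at hle
    have l1 := Real.log_le_log (hrpos x1 hx1S) hx1r
    have l2 := Real.log_le_log (by positivity) hzr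
    rw [Real.log_mul (by norm_num) hh2.ne'] at l1 l2
    have l3 : 0 ≤ 32 / h ^ 2 * (x1 2 - y 2) ^ 2 := by positivity
    have l4 : 32 / h ^ 2 * (z 2 - y 2) ^ 2 ≤ 1 / 2 := by
      rw [div_mul_eq_mul_div, div_le_iff₀ hh2]; linarith
    have l5 : (1:ℝ) / 2 < Real.log (63 / 64) - Real.log (9 / 16) := by
      rw [← Real.log_div (by norm_num) (by norm_num), Real.lt_log_iff_exp_lt (by norm_num)]
      have e1 := Real.exp_one_lt_d9
      have e2 : Real.exp (1 / 2) ^ 2 = Real.exp 1 := by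
        rw [← Real.exp_nat_mul]; norm_num
      have e3 := Real.exp_pos (1 / 2)
      norm_num at *
      nlinarith
    linarith
  obtain ⟨Q, ε, u, hε, hu, hS⟩ := hmin.2 z ⟨hzS, hzbd⟩
  refine no_interior_min S y z (32 / h ^ 2) hzS Q ε u hε hu hS (hrpos z hzS) ?_ hzmin'
  rw [div_mul_eq_mul_div, lt_div_iff₀ hh2]
  nlinarith [hr2 z hzS]

end
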